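/- Let s ≥ 1, let 1 ≤ q ≤ s, and set n = T_s + q. If a partition λ of n satisfies deg(λ) = Δ_n, then supp(λ) = s; that is, every degree-maximizing partition of n has exactly s distinct part sizes. -/

import Mathlib

/-!
Write `r` for the number of distinct part sizes. The distinct part sizes sum to at least
`1 + ⋯ + r`, so a partition of a number less than `T (s + 1)` has `r ≤ s`. Both bonus counts range
over subsets of the part sizes, so the degree is at most `r (r - 1) + 2 r = r (r + 1)`; for `r < s`
this is at most `s (s - 1)`. The partition with parts `1, …, s` and one further copy of `q` has
degree greater than `s (s - 1)` because its repeated part contributes a multiplicity bonus.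
-/

namespace PartitionDegree

/-- The `m`-th triangular number. -/
def T (m : ℕ) : ℕ := m * (m + 1) / 2

/-- The number of distinct part sizes of a partition. -/
def supp {n : ℕ} (lam : n.Partition) : ℕ := lam.parts.toFinset.card

/-- The gap-bonus count: distinct part sizes `L ≥ 2` such that `L - 1` is not a part size. -/
def gapBonus {n : ℕ} (lam : n.Partition) : ℕ :=
  (lam.parts.toFinset.filter (fun L => 2 ≤ L ∧ (L - 1) ∉ lam.parts)).card

/-- The multiplicity-bonus count: distinct part sizes occurring with multiplicity at least 2. -/
def multBonus {n : ℕ} (lam : n.Partition) : ℕ :=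
  (lam.parts.toFinset.filter (fun L => 2 ≤ lam.parts.count L)).card

/-- The degree of a partition in the partition graph. -/
def deg {n : ℕ} (lam : n.Partition) : ℕ :=
  supp lam * (supp lam - 1) + gapBonus lam + multBonus lam

/-- The maximal degree over all partitions of `n`. -/
def maxDeg (n : ℕ) : ℕ := Finset.univ.sup (fun lam : n.Partition => deg lam)

/-- `ρ(q)`: the maximum of `a + b` over pairs with `T a + T b ≤ q`. -/
noncomputable def rho (q : ℕ) : ℕ := sSup {c : ℕ | ∃ a b : ℕ, c = a + b ∧ T a + T b ≤ q}

/-- `mu` is the conjugate of `lam`: for each `k ≥ 1`, the multiplicity of `k` in `mu`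
equals (number of parts of `lam` that are `≥ k`) minus (number of parts `≥ k + 1`). -/
def IsConjugate {n : ℕ} (lam mu : n.Partition) : Prop :=
  ∀ k : ℕ, 1 ≤ k →
    mu.parts.count k =
      Multiset.countP (fun p => k ≤ p) lam.parts -
        Multiset.countP (fun p => k + 1 ≤ p) lam.parts

theorem T_eq_sum_range (m : ℕ) : T m = ∑ i ∈ Finset.range (m + 1), i := by
  rw [Finset.sum_range_id, Nat.add_sub_cancel, mul_comm, T]

theorem T_succ (m : ℕ) : T (m + 1) = T m + (m + 1) := by
  rw [T_eq_sum_range, Finset.sum_range_succ, ← T_eq_sum_range]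

theorem T_strictMono : StrictMono T :=
  strictMono_nat_of_lt_succ fun m => by rw [T_succ]; omega

theorem sum_range_add_le_sum {S : Finset ℕ} {c : ℕ} (hS : ∀ x ∈ S, c ≤ x) :
    ∑ i ∈ Finset.range S.card, (c + i) ≤ ∑ x ∈ S, x := by
  have h : ∀ x ∈ S.map (Nat.castEmbedding (R := ℤ)), (c : ℤ) ≤ x := by simpa using hS
  zify
  simpa only [Finset.card_map, Finset.sum_map, Nat.castEmbedding_apply] using
    Finset.sum_range_le_sum h

theorem T_card_le_sum {S : Finset ℕ} (hS : ∀ x ∈ S, 0 < x) : T S.card ≤ ∑ x ∈ S, x :=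
  calc
    T S.card = ∑ i ∈ Finset.range S.card, (1 + i) := by
      simp only [T_eq_sum_range, Finset.sum_range_succ', add_zero, add_comm 1]
    _ ≤ ∑ x ∈ S, x := sum_range_add_le_sum hS

theorem sum_toFinset_le_sum {M : Type*} [AddCommMonoid M] [PartialOrder M]
    [CanonicallyOrderedAdd M] [DecidableEq M] (m : Multiset M) : ∑ x ∈ m.toFinset, x ≤ m.sum := by
  obtain ⟨u, hu⟩ := Multiset.le_iff_exists_add.1 m.dedup_le
  calc
    ∑ x ∈ m.toFinset, x = m.dedup.sum := (Finset.sum_val m.toFinset).symm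
    _ ≤ m.dedup.sum + u.sum := le_self_add
    _ = m.sum := by rw [← Multiset.sum_add, ← hu]

section Partition

variable {n : ℕ} (lam : n.Partition)

theorem T_supp_le : T (supp lam) ≤ n :=
  calc
    T (supp lam) ≤ ∑ x ∈ lam.parts.toFinset, x :=
      T_card_le_sum fun _ hx => lam.parts_pos (Multiset.mem_toFinset.1 hx)
    _ ≤ lam.parts.sum := sum_toFinset_le_sum _
    _ = n := lam.parts_sum

theorem deg_le_supp_mul_succ : deg lam ≤ supp lam * (supp lam + 1) :=
  calc
    deg lam ≤ supp lam * (supp lam - 1) + supp lam + supp lam := by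
      unfold deg
      gcongr <;> exact Finset.card_filter_le _ _
    _ = supp lam * (supp lam + 1) := by
      rcases supp lam with _ | r
      · rfl
      · rw [Nat.add_sub_cancel]
        ring

theorem deg_le_maxDeg : deg lam ≤ maxDeg n :=
  Finset.le_sup (f := deg) (Finset.mem_univ lam)

variable {lam}

theorem multBonus_pos {L : ℕ} (hL : 2 ≤ lam.parts.count L) : 0 < multBonus lam := by
  have hmem : L ∈ lam.parts.toFinset :=
    Multiset.mem_toFinset.2 (Multiset.count_pos.1 (by omega))
  exact Finset.card_pos.2 ⟨L, Finset.mem_filter.2 ⟨hmem, hL⟩⟩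

theorem supp_eq_of_lt_deg {s : ℕ} (hn : n < T (s + 1)) (hdeg : s * (s - 1) < deg lam) :
    supp lam = s := by
  have hle : supp lam < s + 1 := T_strictMono.lt_iff_lt.1 ((T_supp_le lam).trans_lt hn)
  suffices s ≤ supp lam by omega
  by_contra! hlt
  have hdeg_le : deg lam ≤ s * (s - 1) :=
    calc
      deg lam ≤ supp lam * (supp lam + 1) := deg_le_supp_mul_succ lam
      _ ≤ (s - 1) * s := Nat.mul_le_mul (by omega) hlt
      _ = s * (s - 1) := mul_comm _ _
  exact hdeg.not_ge hdeg_le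

end Partition

/-- The partition of `T s + q` with parts `1, …, s` and one additional part `q`, the witness for
the lower bound on `maxDeg (T s + q)`. The zero in `Multiset.range (s + 1)`, and `q` itself if it
is zero, are discarded by `Nat.Partition.ofSums`. -/
def staircase (s q : ℕ) : (T s + q).Partition :=
  .ofSums _ (q ::ₘ Multiset.range (s + 1)) <| by
    have hsum : (Multiset.range (s + 1)).sum = T s :=
      (Finset.sum_val (Finset.range (s + 1))).trans (T_eq_sum_range s).symm
    rw [Multiset.sum_cons, hsum, add_comm]

theorem toFinset_parts_staircase {s q : ℕ} (hqs : q ≤ s) :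
    (staircase s q).parts.toFinset = Finset.Icc 1 s := by
  ext x
  simp only [staircase, Nat.Partition.ofSums_parts, Multiset.mem_toFinset, Multiset.mem_filter,
    Multiset.mem_cons, Multiset.mem_range, Finset.mem_Icc]
  omega

theorem supp_staircase {s q : ℕ} (hqs : q ≤ s) : supp (staircase s q) = s := by
  rw [supp, toFinset_parts_staircase hqs, Nat.card_Icc, Nat.add_sub_cancel]

theorem two_le_count_staircase {s q : ℕ} (hq : q ≠ 0) (hqs : q ≤ s) :
    2 ≤ (staircase s q).parts.count q := by
  have hmem : q ∈ Multiset.range (s + 1) := Multiset.mem_range.2 (by omega)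
  rw [staircase, Nat.Partition.count_ofSums_of_ne_zero _ hq, Multiset.count_cons_self]
  exact Nat.succ_le_succ (Multiset.count_pos.2 hmem)

theorem lt_deg_staircase {s q : ℕ} (hq : q ≠ 0) (hqs : q ≤ s) :
    s * (s - 1) < deg (staircase s q) := by
  have hmult : 0 < multBonus (staircase s q) := multBonus_pos (two_le_count_staircase hq hqs)
  rw [deg, supp_staircase hqs]
  omega

/-- for `n = T s + q` with `1 ≤ q ≤ s`, every degree-maximizing
partition of `n` has support size exactly `s`. -/
theorem support_maximal (s q : ℕ) (hs : 1 ≤ s) (hq1 : 1 ≤ q) (hqs : q ≤ s)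
    (lam : (T s + q).Partition) (hmax : deg lam = maxDeg (T s + q)) :
    supp lam = s := by
  have hn : T s + q < T (s + 1) := by
    rw [T_succ]
    omega
  have hdeg : s * (s - 1) < deg lam :=
    calc
      s * (s - 1) < deg (staircase s q) := lt_deg_staircase (by omega) hqs
      _ ≤ maxDeg (T s + q) := deg_le_maxDeg _
      _ = deg lam := hmax.symm
  exact supp_eq_of_lt_deg hn hdeg

end PartitionDegree
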